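/- Let P be an orthogonal projection of rank d on ℂ^D (1 ≤ d ≤ D), and let w_S be the unique unitarily invariant Borel probability measure on the unit sphere S of ℂ^D. Then ∫_S ( ‖P φ‖² − d/D )² dw_S(φ) = d·(D − d)/(D²·(D+1)). -/

import Mathlib

open MeasureTheory Filter

noncomputable section

/-- The unitary group U(D) of ℂ^D. -/
abbrev UG (D : ℕ) := Matrix.unitaryGroup (Fin D) ℂ

instance (D : ℕ) : MeasurableSpace (UG D) := borel _
instance (D : ℕ) : BorelSpace (UG D) := ⟨rfl⟩

/-- The squared euclidean norm ‖v‖² on ℂ^D. -/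
def nsq {D : ℕ} (v : Fin D → ℂ) : ℝ := ∑ i, ‖v i‖ ^ 2

/-- The hermitian inner product ⟨v,w⟩ on ℂ^D (conjugate-linear in the first variable). -/
def dotc {D : ℕ} (v w : Fin D → ℂ) : ℂ := ∑ i, (starRingEnd ℂ) (v i) * w i

/-- The orthogonal projection U P U⁻¹ onto the image under U of the range of P. -/
def rotProj {D : ℕ} (U : UG D) (P : Matrix (Fin D) (Fin D) ℂ) : Matrix (Fin D) (Fin D) ℂ :=
  (U : Matrix (Fin D) (Fin D) ℂ) * P * ((U⁻¹ : UG D) : Matrix (Fin D) (Fin D) ℂ)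

/-!
For `|z| = 1` the coefficient `⟨e_i + z e_j, v⟩` has the same fourth moment as `⟨√2 e_i, v⟩`,
because U(D) acts transitively on spheres. Averaging over `z ∈ {1, i, -1, -i}` gives
`2 E|v_i|²|v_j|² = E|v_i|⁴` for `i ≠ j`, and summing all moments to `E‖v‖⁴` determines them.
Diagonalizing a Hermitian `A` then gives `E⟨v, Av⟩² = ((tr A)² + tr A²) / (D(D+1)) · E‖v‖⁴`.
On the sphere `‖Pv‖² - d/D = ⟨v, Bv⟩` with `B = P - (d/D) 1` traceless, so the variance is read off
from `tr B² = d(D-d)/D` alone.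
-/

section HermitianForm

variable {D : ℕ}

lemma nsq_nonneg (v : Fin D → ℂ) : 0 ≤ nsq v :=
  Finset.sum_nonneg fun _ _ => sq_nonneg _

lemma ofReal_nsq (v : Fin D → ℂ) : (nsq v : ℂ) = dotc v v := by
  simp [nsq, dotc, Complex.conj_mul']

lemma dotc_mulVec_right (A : Matrix (Fin D) (Fin D) ℂ) (v w : Fin D → ℂ) :
    dotc v (A.mulVec w) = dotc (A.conjTranspose.mulVec v) w := by
  change star v ⬝ᵥ A.mulVec w = star (A.conjTranspose.mulVec v) ⬝ᵥ w
  rw [Matrix.star_mulVec, Matrix.conjTranspose_conjTranspose, Matrix.dotProduct_mulVec]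

lemma dotc_mulVec_mulVec (U : UG D) (v w : Fin D → ℂ) :
    dotc (U.1.mulVec v) (U.1.mulVec w) = dotc v w := by
  rw [dotc_mulVec_right, Matrix.mulVec_mulVec, ← Matrix.star_eq_conjTranspose,
    Matrix.UnitaryGroup.star_mul_self, Matrix.one_mulVec]

lemma nsq_mulVec_eq_re_dotc (A : Matrix (Fin D) (Fin D) ℂ) (v : Fin D → ℂ) :
    nsq (A.mulVec v) = (dotc v ((A.conjTranspose * A).mulVec v)).re := by
  rw [← Complex.ofReal_re (nsq _), ofReal_nsq, ← Matrix.mulVec_mulVec,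
    dotc_mulVec_right A.conjTranspose, Matrix.conjTranspose_conjTranspose]

lemma re_dotc_sub_smul_one_mulVec (A : Matrix (Fin D) (Fin D) ℂ) (c : ℝ) (v : Fin D → ℂ) :
    (dotc v ((A - (c : ℂ) • 1).mulVec v)).re = (dotc v (A.mulVec v)).re - c * nsq v := by
  rw [← Complex.ofReal_re (nsq v), ← Complex.re_ofReal_mul, ofReal_nsq, ← Complex.sub_re]
  simp [dotc, Matrix.sub_mulVec, Matrix.smul_mulVec, mul_sub, Finset.mul_sum, mul_left_comm]

lemma dotc_single_left (i : Fin D) (c : ℂ) (v : Fin D → ℂ) :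
    dotc (Pi.single i c) v = starRingEnd ℂ c * v i := by
  simp [dotc, Pi.single_apply, apply_ite]

lemma dotc_single_add_single_left (i j : Fin D) (a b : ℂ) (v : Fin D → ℂ) :
    dotc (Pi.single i a + Pi.single j b) v = starRingEnd ℂ a * v i + starRingEnd ℂ b * v j := by
  simp only [← dotc_single_left]
  simp only [dotc, Pi.add_apply, map_add, add_mul, Finset.sum_add_distrib]

lemma nsq_single_add_single {i j : Fin D} (hij : i ≠ j) (a b : ℂ) :
    nsq (Pi.single i a + Pi.single j b) = ‖a‖ ^ 2 + ‖b‖ ^ 2 := by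
  rw [nsq, Fintype.sum_eq_add i j hij]
  · simp [hij, hij.symm]
  · rintro k ⟨hki, hkj⟩
    simp [hki, hkj]

lemma continuous_dotc (u : Fin D → ℂ) : Continuous (dotc u) := by
  unfold dotc
  fun_prop

lemma nsq_smul (c : ℂ) (v : Fin D → ℂ) : nsq (c • v) = ‖c‖ ^ 2 * nsq v := by
  simp [nsq, mul_pow, Finset.mul_sum]

lemma norm_sq_apply_le_nsq (v : Fin D → ℂ) (i : Fin D) : ‖v i‖ ^ 2 ≤ nsq v :=
  Finset.single_le_sum (f := fun i => ‖v i‖ ^ 2) (fun _ _ => by positivity) (Finset.mem_univ i)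

lemma norm_dotc_sq_le_nsq_mul_nsq (u v : Fin D → ℂ) : ‖dotc u v‖ ^ 2 ≤ nsq u * nsq v := by
  have h := norm_inner_le_norm (𝕜 := ℂ) (WithLp.toLp 2 u) (WithLp.toLp 2 v)
  have hdot : inner ℂ (WithLp.toLp 2 u) (WithLp.toLp 2 v) = dotc u v := by
    simp [PiLp.inner_apply, dotc, mul_comm]
  have hnorm (x : Fin D → ℂ) : ‖WithLp.toLp 2 x‖ ^ 2 = nsq x := by
    simp [EuclideanSpace.norm_sq_eq, nsq]
  rw [hdot] at h
  calc ‖dotc u v‖ ^ 2 ≤ (‖WithLp.toLp 2 u‖ * ‖WithLp.toLp 2 v‖) ^ 2 := by gcongr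
    _ = nsq u * nsq v := by rw [mul_pow, hnorm, hnorm]

lemma exists_unitary_mulVec_single_one_eq (i : Fin D) {u : Fin D → ℂ} (hu : nsq u = 1) :
    ∃ U : UG D, U.1.mulVec (Pi.single i 1) = u := by
  have hnorm : ‖WithLp.toLp 2 u‖ = 1 := by
    rw [EuclideanSpace.norm_eq, Real.sqrt_eq_one]
    exact hu
  have horth : Orthonormal ℂ (({i} : Set (Fin D)).domRestrict fun _ => WithLp.toLp 2 u) :=
    ⟨fun _ => hnorm, fun j k hjk => (hjk (Subsingleton.elim j k)).elim⟩
  obtain ⟨b, hb⟩ := horth.exists_orthonormalBasis_extension_of_card_eq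
    (by simp [finrank_euclideanSpace])
  refine ⟨⟨_, (EuclideanSpace.basisFun (Fin D) ℂ).toMatrix_orthonormalBasis_mem_unitary b⟩, ?_⟩
  ext k
  simp [Module.Basis.toMatrix_apply, hb i rfl]

lemma exists_unitary_mulVec_single_sqrt_nsq_eq (i : Fin D) (u : Fin D → ℂ) :
    ∃ U : UG D, U.1.mulVec (Pi.single i (√(nsq u) : ℂ)) = u := by
  obtain rfl | hu := eq_or_ne u 0
  · exact ⟨1, by simp [nsq]⟩
  have hpos : 0 < nsq u := by
    obtain ⟨k, hk⟩ := Function.ne_iff.mp hu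
    exact (pow_pos (norm_pos_iff.mpr hk) 2).trans_le (norm_sq_apply_le_nsq u k)
  have hr : (√(nsq u) : ℂ) ≠ 0 := Complex.ofReal_ne_zero.mpr (Real.sqrt_pos.mpr hpos).ne'
  have hunit : nsq ((√(nsq u) : ℂ)⁻¹ • u) = 1 := by
    rw [nsq_smul, norm_inv, Complex.norm_real, inv_pow, Real.norm_eq_abs, sq_abs,
      Real.sq_sqrt hpos.le, inv_mul_cancel₀ hpos.ne']
  obtain ⟨U, hU⟩ := exists_unitary_mulVec_single_one_eq i hunit
  refine ⟨U, ?_⟩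
  rw [← mul_one (√(nsq u) : ℂ), ← smul_eq_mul, Pi.single_smul, Matrix.mulVec_smul, hU,
    smul_inv_smul₀ hr]

lemma re_dotc_mulVec_eq_sum_eigenvalues {A : Matrix (Fin D) (Fin D) ℂ} (hA : A.IsHermitian)
    (v : Fin D → ℂ) :
    (dotc v (A.mulVec v)).re =
      ∑ i, hA.eigenvalues i * ‖(star hA.eigenvectorUnitary : UG D).1.mulVec v i‖ ^ 2 := by
  set U := hA.eigenvectorUnitary
  have hspec : A.mulVec v = U.1.mulVec ((Matrix.diagonal (RCLike.ofReal ∘ hA.eigenvalues)).mulVec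
      ((star U).1.mulVec v)) := by
    conv_lhs => rw [hA.spectral_theorem, Unitary.conjStarAlgAut_apply]
    simp only [Matrix.mulVec_mulVec, mul_assoc]
    rfl
  rw [hspec, dotc_mulVec_right]
  change (dotc ((star U).1.mulVec v) _).re = _
  simp only [dotc, Matrix.mulVec_diagonal, Complex.re_sum]
  refine Finset.sum_congr rfl fun i _ => ?_
  rw [mul_left_comm, Complex.conj_mul', Function.comp_apply, ← Complex.ofReal_pow]
  exact Complex.re_ofReal_mul _ _

end HermitianForm

section Trace

variable {n : Type*} [Fintype n]

lemma trace_mul_self_eq_sum_sq_eigenvalues [DecidableEq n] {𝕜 : Type*} [RCLike 𝕜] {A : Matrix n n 𝕜}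
    (hA : A.IsHermitian) : (A * A).trace = ∑ i, (hA.eigenvalues i : 𝕜) ^ 2 := by
  rw [← Matrix.trace_map' (Unitary.conjStarAlgAut 𝕜 _ (star hA.eigenvectorUnitary)), map_mul,
    hA.conjStarAlgAut_star_eigenvectorUnitary, Matrix.diagonal_mul_diagonal, Matrix.trace_diagonal]
  simp only [Function.comp_apply, sq]

lemma trace_eq_rank_of_mul_self_eq {K : Type*} [Field K] {P : Matrix n n K} (hP : P * P = P) :
    P.trace = P.rank := by
  classical
  have hidem : IsIdempotentElem (Matrix.toLin' P) :=
    (Matrix.toLin'_mul P P).symm.trans (congrArg _ hP)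
  rw [← Matrix.trace_toLin'_eq, (LinearMap.IsIdempotentElem.isProj_range _ hidem).trace]
  rfl

lemma trace_sub_smul_one_mul_self [DecidableEq n] {R : Type*} [CommRing R]
    {P : Matrix n n R} (hP : P * P = P) (c : R) :
    ((P - c • 1) * (P - c • 1)).trace = (1 - 2 * c) * P.trace + c ^ 2 * Fintype.card n := by
  simp only [sub_mul, mul_sub, hP, Algebra.smul_mul_assoc, one_mul, Algebra.mul_smul_comm, mul_one,
    Matrix.trace_sub, Matrix.trace_smul, smul_eq_mul, Matrix.trace_one]
  ring

end Trace

lemma sum_norm_add_I_pow_mul_pow_four (a b : ℂ) :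
    ∑ k ∈ Finset.range 4, ‖a + Complex.I ^ k * b‖ ^ 4 =
      4 * (‖a‖ ^ 4 + ‖b‖ ^ 4 + 4 * (‖a‖ ^ 2 * ‖b‖ ^ 2)) := by
  have hpow (z : ℂ) : ‖z‖ ^ 4 = (z.re * z.re + z.im * z.im) ^ 2 := by
    rw [← Complex.normSq_apply, ← Complex.sq_norm, ← pow_mul]
  simp only [hpow, Complex.sq_norm, Complex.normSq_apply, Finset.sum_range_succ, Finset.range_one,
    Finset.sum_singleton, pow_zero, pow_one, Complex.I_sq, Complex.I_pow_three, Complex.add_re,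
    Complex.add_im, Complex.mul_re, Complex.mul_im, Complex.neg_re, Complex.neg_im, Complex.one_re,
    Complex.one_im, Complex.I_re, Complex.I_im]
  ring

lemma sum_sum_one_add_ite_mul {ι R : Type*} [Fintype ι] [DecidableEq ι] [CommRing R] (f : ι → R) :
    ∑ i, ∑ j, f i * f j * (1 + if i = j then 1 else 0) = (∑ i, f i) ^ 2 + ∑ i, f i ^ 2 := by
  simp [mul_add, Finset.sum_add_distrib, ← Finset.sum_mul_sum, sq]

section UnitaryInvariant

/-- Invariance of a measure on ℂ^D under the action of the unitary group U(D). On the unit sphere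
it singles out the uniform probability measure; Gaussian measures satisfy it as well. -/
def IsUnitaryInvariant {D : ℕ} (w : Measure (Fin D → ℂ)) : Prop :=
  ∀ U : UG D, Measure.map (fun v => U.1.mulVec v) w = w

variable {D : ℕ} {w : Measure (Fin D → ℂ)}

lemma IsUnitaryInvariant.integral_comp_mulVec {E : Type*} [NormedAddCommGroup E] [NormedSpace ℝ E]
    (hinv : IsUnitaryInvariant w) (U : UG D) {f : (Fin D → ℂ) → E}
    (hf : AEStronglyMeasurable f w) : ∫ v, f (U.1.mulVec v) ∂w = ∫ v, f v ∂w := by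
  have hU : Continuous fun v : Fin D → ℂ => U.1.mulVec v := by fun_prop
  rw [← integral_map hU.aemeasurable (by rwa [hinv U]), hinv U]

lemma integrable_of_norm_le_mul_nsq_sq (hint : Integrable (fun v => nsq v ^ 2) w)
    {f : (Fin D → ℂ) → ℝ} (hf : Continuous f) (C : ℝ) (hC : ∀ v, ‖f v‖ ≤ C * nsq v ^ 2) :
    Integrable f w :=
  (hint.const_mul C).mono' hf.aestronglyMeasurable (ae_of_all _ hC)

lemma integrable_norm_dotc_pow_four (hint : Integrable (fun v => nsq v ^ 2) w) (u : Fin D → ℂ) :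
    Integrable (fun v => ‖dotc u v‖ ^ 4) w := by
  refine integrable_of_norm_le_mul_nsq_sq hint ((continuous_dotc u).norm.pow 4) (nsq u ^ 2)
    fun v => ?_
  calc ‖‖dotc u v‖ ^ 4‖ = (‖dotc u v‖ ^ 2) ^ 2 := by rw [norm_pow, norm_norm, ← pow_mul]
    _ ≤ (nsq u * nsq v) ^ 2 := by gcongr; exact norm_dotc_sq_le_nsq_mul_nsq u v
    _ = nsq u ^ 2 * nsq v ^ 2 := mul_pow _ _ _

lemma integrable_norm_sq_mul_norm_sq (hint : Integrable (fun v => nsq v ^ 2) w) (i j : Fin D) :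
    Integrable (fun v => ‖v i‖ ^ 2 * ‖v j‖ ^ 2) w := by
  refine integrable_of_norm_le_mul_nsq_sq hint (by fun_prop) 1 fun v => ?_
  rw [Real.norm_of_nonneg (by positivity), one_mul, sq (nsq v)]
  gcongr
  · exact (sq_nonneg _).trans (norm_sq_apply_le_nsq v i)
  · exact norm_sq_apply_le_nsq v i
  · exact norm_sq_apply_le_nsq v j

lemma integral_norm_dotc_pow_four (hinv : IsUnitaryInvariant w) (u : Fin D → ℂ) (i : Fin D) :
    ∫ v, ‖dotc u v‖ ^ 4 ∂w = nsq u ^ 2 * ∫ v, ‖v i‖ ^ 4 ∂w := by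
  obtain ⟨U, hU⟩ := exists_unitary_mulVec_single_sqrt_nsq_eq i u
  have hpoint (v : Fin D → ℂ) : ‖dotc u (U.1.mulVec v)‖ ^ 4 = nsq u ^ 2 * ‖v i‖ ^ 4 := by
    conv_lhs => rw [← hU, dotc_mulVec_mulVec, dotc_single_left, norm_mul, RCLike.norm_conj,
      Complex.norm_real, mul_pow, Real.norm_of_nonneg (Real.sqrt_nonneg _), pow_mul _ 2 2,
      Real.sq_sqrt (nsq_nonneg u)]
  rw [← hinv.integral_comp_mulVec U (f := fun v => ‖dotc u v‖ ^ 4)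
    ((continuous_dotc u).norm.pow 4).aestronglyMeasurable, ← integral_const_mul]
  simp only [hpoint]

lemma integral_norm_apply_pow_four_eq (hinv : IsUnitaryInvariant w) (i j : Fin D) :
    ∫ v, ‖v i‖ ^ 4 ∂w = ∫ v, ‖v j‖ ^ 4 ∂w := by
  simpa [dotc_single_left, nsq, Pi.single_apply, apply_ite] using
    integral_norm_dotc_pow_four hinv (Pi.single i 1) j

lemma integrable_norm_add_mul_pow_four (hint : Integrable (fun v => nsq v ^ 2) w) (i j : Fin D)
    (z : ℂ) : Integrable (fun v => ‖v i + z * v j‖ ^ 4) w := by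
  have h := integrable_norm_dotc_pow_four hint (Pi.single i 1 + Pi.single j (starRingEnd ℂ z))
  simp only [dotc_single_add_single_left, map_one, one_mul, Complex.conj_conj] at h
  exact h

lemma integral_norm_add_mul_pow_four (hinv : IsUnitaryInvariant w) {i j : Fin D} (hij : i ≠ j)
    {z : ℂ} (hz : ‖z‖ = 1) : ∫ v, ‖v i + z * v j‖ ^ 4 ∂w = 4 * ∫ v, ‖v i‖ ^ 4 ∂w := by
  have h := integral_norm_dotc_pow_four hinv (Pi.single i 1 + Pi.single j (starRingEnd ℂ z)) i
  simp only [dotc_single_add_single_left, nsq_single_add_single hij, map_one, one_mul,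
    Complex.conj_conj, norm_one, RCLike.norm_conj, hz] at h
  linarith

lemma integral_norm_sq_mul_norm_sq_of_ne (hinv : IsUnitaryInvariant w)
    (hint : Integrable (fun v => nsq v ^ 2) w) {i j : Fin D} (hij : i ≠ j) :
    2 * ∫ v, ‖v i‖ ^ 2 * ‖v j‖ ^ 2 ∂w = ∫ v, ‖v i‖ ^ 4 ∂w := by
  have hcoord (k : Fin D) : Integrable (fun v => ‖v k‖ ^ 4) w := by
    simpa only [← pow_add] using integrable_norm_sq_mul_norm_sq hint k k
  have hprod := integrable_norm_sq_mul_norm_sq hint i j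
  have hpolar : ∑ k ∈ Finset.range 4, ∫ v, ‖v i + Complex.I ^ k * v j‖ ^ 4 ∂w =
      4 * (∫ v, ‖v i‖ ^ 4 ∂w + ∫ v, ‖v j‖ ^ 4 ∂w + 4 * ∫ v, ‖v i‖ ^ 2 * ‖v j‖ ^ 2 ∂w) := by
    rw [← integral_finsetSum _ fun k _ =>
      integrable_norm_add_mul_pow_four hint i j (Complex.I ^ k)]
    simp only [sum_norm_add_I_pow_mul_pow_four]
    rw [integral_const_mul,
      integral_add (f := fun v => ‖v i‖ ^ 4 + ‖v j‖ ^ 4) ((hcoord i).add (hcoord j))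
        (hprod.const_mul 4),
      integral_add (hcoord i) (hcoord j), integral_const_mul]
  have hI (k : ℕ) : ‖Complex.I ^ k‖ = 1 := by simp
  simp only [integral_norm_add_mul_pow_four hinv hij (hI _), Finset.sum_const, Finset.card_range,
    nsmul_eq_mul, Nat.cast_ofNat, integral_norm_apply_pow_four_eq hinv j i] at hpolar
  linarith

lemma integral_norm_sq_mul_norm_sq_eq (hinv : IsUnitaryInvariant w)
    (hint : Integrable (fun v => nsq v ^ 2) w) (i j k : Fin D) :
    ∫ v, ‖v i‖ ^ 2 * ‖v j‖ ^ 2 ∂w = (1 + if i = j then 1 else 0) * ((∫ v, ‖v k‖ ^ 4 ∂w) / 2) := by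
  rw [integral_norm_apply_pow_four_eq hinv k i]
  obtain rfl | hij := eq_or_ne i j
  · simp only [← pow_add, if_true]
    ring
  · rw [if_neg hij, ← integral_norm_sq_mul_norm_sq_of_ne hinv hint hij]
    ring

lemma integral_sum_mul_norm_sq_sq (hint : Integrable (fun v => nsq v ^ 2) w) (a : Fin D → ℝ) :
    ∫ v, (∑ i, a i * ‖v i‖ ^ 2) ^ 2 ∂w =
      ∑ i, ∑ j, a i * a j * ∫ v, ‖v i‖ ^ 2 * ‖v j‖ ^ 2 ∂w := by
  have hterm (i j : Fin D) : Integrable (fun v => a i * a j * (‖v i‖ ^ 2 * ‖v j‖ ^ 2)) w :=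
    (integrable_norm_sq_mul_norm_sq hint i j).const_mul _
  have hexpand (v : Fin D → ℂ) : (∑ i, a i * ‖v i‖ ^ 2) ^ 2 =
      ∑ i, ∑ j, a i * a j * (‖v i‖ ^ 2 * ‖v j‖ ^ 2) := by
    simp only [sq (Finset.sum _ _), Finset.sum_mul_sum, mul_mul_mul_comm]
  simp only [hexpand]
  rw [integral_finsetSum _ fun i _ => integrable_finsetSum _ fun j _ => hterm i j]
  simp only [integral_finsetSum _ fun j _ => hterm _ j, integral_const_mul]

theorem integral_norm_sq_mul_norm_sq (hinv : IsUnitaryInvariant w)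
    (hint : Integrable (fun v => nsq v ^ 2) w) (i j : Fin D) :
    ∫ v, ‖v i‖ ^ 2 * ‖v j‖ ^ 2 ∂w =
      (1 + if i = j then 1 else 0) * ((∫ v, nsq v ^ 2 ∂w) / (D * (D + 1))) := by
  have hD : (D : ℝ) ≠ 0 := Nat.cast_ne_zero.mpr i.pos.ne'
  have htotal : ∑ i, ∑ j, ∫ v, ‖v i‖ ^ 2 * ‖v j‖ ^ 2 ∂w = ∫ v, nsq v ^ 2 ∂w := by
    simpa only [one_mul, nsq] using (integral_sum_mul_norm_sq_sq hint fun _ => 1).symm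
  simp only [integral_norm_sq_mul_norm_sq_eq hinv hint _ _ i, add_mul, Finset.sum_add_distrib,
    Finset.sum_const, Finset.card_univ, Fintype.card_fin, nsmul_eq_mul, ite_mul, zero_mul,
    Finset.sum_ite_eq, Finset.mem_univ, if_true, one_mul] at htotal
  rw [integral_norm_sq_mul_norm_sq_eq hinv hint i j i, ← htotal]
  field_simp

theorem integral_re_dotc_mulVec_sq (hinv : IsUnitaryInvariant w)
    (hint : Integrable (fun v => nsq v ^ 2) w) {A : Matrix (Fin D) (Fin D) ℂ}
    (hA : A.IsHermitian) :
    ∫ v, (dotc v (A.mulVec v)).re ^ 2 ∂w =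
      (A.trace.re ^ 2 + (A * A).trace.re) / (D * (D + 1)) * ∫ v, nsq v ^ 2 ∂w := by
  set ev := hA.eigenvalues with hev
  have htrace : A.trace.re = ∑ i, ev i := by
    simp [hA.trace_eq_sum_eigenvalues, hev]
  have htrace_sq : (A * A).trace.re = ∑ i, ev i ^ 2 := by
    simp [trace_mul_self_eq_sum_sq_eigenvalues hA, hev, ← Complex.ofReal_pow]
  calc ∫ v, (dotc v (A.mulVec v)).re ^ 2 ∂w
      = ∫ v, (∑ i, ev i * ‖v i‖ ^ 2) ^ 2 ∂w := by
        simp only [re_dotc_mulVec_eq_sum_eigenvalues hA]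
        exact hinv.integral_comp_mulVec (star hA.eigenvectorUnitary)
          (f := fun v => (∑ i, ev i * ‖v i‖ ^ 2) ^ 2)
          (by fun_prop : Continuous _).aestronglyMeasurable
    _ = ∑ i, ∑ j, ev i * ev j * ∫ v, ‖v i‖ ^ 2 * ‖v j‖ ^ 2 ∂w :=
        integral_sum_mul_norm_sq_sq hint ev
    _ = (A.trace.re ^ 2 + (A * A).trace.re) / (D * (D + 1)) * ∫ v, nsq v ^ 2 ∂w := by
        simp only [integral_norm_sq_mul_norm_sq hinv hint, ← mul_assoc, ← Finset.sum_mul]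
        rw [sum_sum_one_add_ite_mul, htrace, htrace_sq]
        ring

end UnitaryInvariant

theorem stmt6_general {D d : ℕ} (hD : D ≠ 0) {P : Matrix (Fin D) (Fin D) ℂ} (hP1 : P * P = P)
    (hP2 : P.IsHermitian) (hPr : P.rank = d) {w : Measure (Fin D → ℂ)}
    (hinv : IsUnitaryInvariant w) (hint : Integrable (fun v => nsq v ^ 2) w) :
    ∫ v, (nsq (P.mulVec v) - d / D * nsq v) ^ 2 ∂w =
      d * (D - d) / (D ^ 2 * (D + 1)) * ∫ v, nsq v ^ 2 ∂w := by
  have hD' : (D : ℝ) ≠ 0 := Nat.cast_ne_zero.mpr hD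
  set c : ℝ := d / D with hc
  set B := P - (c : ℂ) • 1 with hB
  have hBherm : B.IsHermitian :=
    hP2.sub (Matrix.isHermitian_one.smul (Complex.conj_ofReal c))
  have htrace : B.trace.re = 0 := by
    simp [hB, trace_eq_rank_of_mul_self_eq hP1, hPr, hc, hD']
  have htrace_sq : (B * B).trace.re = (1 - 2 * c) * d + c ^ 2 * D := by
    rw [hB, trace_sub_smul_one_mul_self hP1, trace_eq_rank_of_mul_self_eq hP1, hPr,
      Fintype.card_fin]
    simp [← Complex.ofReal_pow]
  simp only [nsq_mulVec_eq_re_dotc, hP2.eq, hP1, ← re_dotc_sub_smul_one_mulVec, ← hB]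
  rw [integral_re_dotc_mulVec_sq hinv hint hBherm, htrace, htrace_sq, hc]
  congr 1
  field_simp
  ring

theorem stmt6 (D d : ℕ) (hd : 1 ≤ d) (hdD : d ≤ D)
    (P : Matrix (Fin D) (Fin D) ℂ) (hP1 : P * P = P) (hP2 : P.IsHermitian) (hPr : P.rank = d)
    (w : Measure (Fin D → ℂ)) [IsProbabilityMeasure w]
    (hsupp : w {v : Fin D → ℂ | nsq v = 1}ᶜ = 0)
    (hinv : ∀ U : UG D,
      Measure.map (fun v => (U : Matrix (Fin D) (Fin D) ℂ).mulVec v) w = w) :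
    ∫ v, (nsq (P.mulVec v) - d / D) ^ 2 ∂w =
      (d : ℝ) * ((D : ℝ) - d) / ((D : ℝ) ^ 2 * ((D : ℝ) + 1)) := by
  have hsphere : ∀ᵐ v ∂w, nsq v = 1 := hsupp
  have hone : (fun v => nsq v ^ 2) =ᵐ[w] fun _ => 1 := hsphere.mono fun v hv => by simp [hv]
  have hint := (integrable_congr hone).mpr (integrable_const 1)
  calc ∫ v, (nsq (P.mulVec v) - d / D) ^ 2 ∂w
      = ∫ v, (nsq (P.mulVec v) - d / D * nsq v) ^ 2 ∂w :=
        integral_congr_ae (hsphere.mono fun v hv => by simp [hv])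
    _ = d * (D - d) / (D ^ 2 * (D + 1)) * ∫ v, nsq v ^ 2 ∂w :=
        stmt6_general (by lia) hP1 hP2 hPr hinv hint
    _ = d * (D - d) / (D ^ 2 * (D + 1)) := by simp [integral_congr_ae hone]
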